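/- Let ζ ∈ (-1/2, ∞) and α ∈ (0,2]. Then the semigroup defined by p_ζ^{(α)} is strongly continuous on L²((0,∞), s^{2ζ} ds); that is, for every f ∈ L²((0,∞), s^{2ζ} ds), lim_{t → 0⁺} ∫_0^∞ |∫_0^∞ p_ζ^{(α)}(t,r,s) f(s) s^{2ζ} ds − f(r)|² r^{2ζ} dr = 0. -/

import Mathlib

open MeasureTheory Real Set Filter

/-- Modified Bessel function of the first kind of order `ν`. -/
noncomputable def besselI (ν x : ℝ) : ℝ :=
  ∑' k : ℕ, (x / 2) ^ (2 * (k : ℝ) + ν) / ((Nat.factorial k : ℝ) * Real.Gamma ((k : ℝ) + ν + 1))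

/-- The Bessel heat kernel `p_ζ^{(2)}(t,r,s)`. -/
noncomputable def besselHeat (ζ t r s : ℝ) : ℝ :=
  (r * s) ^ ((1 : ℝ) / 2 - ζ) / (2 * t) * Real.exp (-(r ^ 2 + s ^ 2) / (4 * t)) *
    besselI (ζ - 1 / 2) (r * s / (2 * t))

/-- `σ` is a family of `α/2`-stable subordinator densities. -/
def IsStableSubordinatorDensity (α : ℝ) (σ : ℝ → ℝ → ℝ) : Prop :=
  (∀ t, 0 < t → ∀ τ, 0 < τ → 0 ≤ σ t τ) ∧
  (∀ t, 0 < t → Measurable (σ t)) ∧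
  (∀ t l : ℝ, 0 < t → 0 ≤ l →
    (∫ τ in Ioi (0 : ℝ), Real.exp (-τ * l) * σ t τ) = Real.exp (-t * l ^ (α / 2)))

/-- The `α/2`-subordinated Bessel heat kernel `p_ζ^{(α)}(t,r,s)`. -/
noncomputable def subKernel (ζ : ℝ) (σ : ℝ → ℝ → ℝ) (t r s : ℝ) : ℝ :=
  ∫ τ in Ioi (0 : ℝ), besselHeat ζ τ r s * σ t τ

/-- `p` is the kernel `p_ζ^{(α)}` for `α ∈ (0,2]`: the Bessel heat kernel itself when `α = 2`,
and the `α/2`-subordinated kernel when `α < 2`. -/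
def IsSubordinatedBesselKernel (ζ α : ℝ) (p : ℝ → ℝ → ℝ → ℝ) : Prop :=
  (α = 2 ∧ ∀ t r s : ℝ, p t r s = besselHeat ζ t r s) ∨
  (α < 2 ∧ ∃ σ : ℝ → ℝ → ℝ, IsStableSubordinatorDensity α σ ∧
    ∀ t r s : ℝ, p t r s = subKernel ζ σ t r s)

/-!
Write `μ` for the measure `s ^ (2ζ) ds` on `(0, ∞)`. Each kernel is a symmetric Markov density
`κ_t` with respect to `μ`. If `P_t f` is the average of `f` against `κ_t`, Jensen's inequality
bounds `‖P_t f - f‖²` by the energy `∬ κ_t(r, s) |f s - f r|² dμ dμ`, and it suffices that the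
energy tends to `0`. Since it is at most `4 ‖f‖²`, one may assume `f ∈ C_c`, and then locally
uniform decay of the fourth moments `∫ κ_t(r, s) |s - r|⁴ dμ(s)` is enough. These are at most
`∫ κ_t(r, s) (s² - r²)² dμ(s)`, which is explicit for the Bessel heat kernel: expanding `I_ν`
exhibits it as the law of `√(4tG)`, where `G` has a Gamma law whose shape is shifted by a Poisson
variable of mean `r² / (4t)`.

Subordination averages the energies over the law of the subordinator, and Markov's inequality for
`1 - e^{-τ}` together with the Laplace transform shows that this law concentrates at `0`.
-/

open scoped ENNReal NNReal Topology

lemma tendsto_zero_of_forall_le_continuous_add {T : Type*} {l : Filter T} {F : T → ℝ≥0∞}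
    {φ : ℝ≥0∞ → ℝ≥0∞} (hφ : Continuous φ) (hφ0 : φ 0 = 0)
    (h : ∀ η ≠ 0, ∃ b : T → ℝ≥0∞, Tendsto b l (𝓝 0) ∧ ∀ᶠ t in l, F t ≤ φ η + b t) :
    Tendsto F l (𝓝 0) := by
  refine ENNReal.tendsto_nhds_zero.2 fun ε hε => ?_
  have hε2 : 0 < ε / 2 := ENNReal.half_pos hε.ne'
  have hlim : Tendsto φ (𝓝[≠] 0) (𝓝 0) := (hφ.tendsto' 0 0 hφ0).mono_left nhdsWithin_le_nhds
  obtain ⟨η, hφη, hη⟩ :=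
    ((ENNReal.tendsto_nhds_zero.1 hlim _ hε2).and self_mem_nhdsWithin).exists
  obtain ⟨b, hb, hF⟩ := h η hη
  filter_upwards [hF, ENNReal.tendsto_nhds_zero.1 hb _ hε2] with t hFt hbt
  calc F t ≤ φ η + b t := hFt
    _ ≤ ε / 2 + ε / 2 := by gcongr
    _ = ε := ENNReal.add_halves ε

lemma exists_enorm_sub_sq_le_add_mul_edist_pow {X E : Type*} [PseudoEMetricSpace X]
    [SeminormedAddCommGroup E] {g : X → E} (hg : UniformContinuous g) {M : ℝ≥0}
    (hM : ∀ x, ‖g x‖ₑ ≤ M) (n : ℕ) {η : ℝ≥0∞} (hη : η ≠ 0) :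
    ∃ C : ℝ≥0∞, C ≠ ∞ ∧ ∀ x y, ‖g y - g x‖ₑ ^ 2 ≤ η ^ 2 + C * edist x y ^ n := by
  obtain ⟨δ, hδ, hgδ⟩ := EMetric.uniformContinuous_iff.1 hg η (pos_iff_ne_zero.2 hη)
  have hδ' : min δ 1 ^ n ≠ 0 := pow_ne_zero _ (lt_min hδ one_pos).ne'
  have hδ'' : min δ 1 ^ n ≠ ∞ := ENNReal.pow_ne_top (min_lt_of_right_lt ENNReal.one_lt_top).ne
  refine ⟨(M + M) ^ 2 / min δ 1 ^ n, ENNReal.div_ne_top (by finiteness) hδ', fun x y => ?_⟩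
  rcases lt_or_ge (edist x y) (min δ 1) with hxy | hxy
  · have hclose : edist (g x) (g y) < η := hgδ (hxy.trans_le (min_le_left _ _))
    rw [edist_comm, edist_eq_enorm_sub] at hclose
    exact le_add_right (by gcongr)
  · refine le_add_left ?_
    calc ‖g y - g x‖ₑ ^ 2 ≤ (M + M) ^ 2 := by
          gcongr
          exact enorm_sub_le.trans (add_le_add (hM y) (hM x))
      _ = (M + M) ^ 2 / min δ 1 ^ n * min δ 1 ^ n := (ENNReal.div_mul_cancel hδ' hδ'').symm
      _ ≤ (M + M) ^ 2 / min δ 1 ^ n * edist x y ^ n := by gcongr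

lemma enorm_add_sq_le {E : Type*} [NormedAddCommGroup E] (a b : E) :
    ‖a + b‖ₑ ^ 2 ≤ 2 * (‖a‖ₑ ^ 2 + ‖b‖ₑ ^ 2) := by
  calc ‖a + b‖ₑ ^ 2 ≤ (‖a‖ₑ + ‖b‖ₑ) ^ 2 := by gcongr; exact enorm_add_le a b
    _ ≤ 2 * (‖a‖ₑ ^ 2 + ‖b‖ₑ ^ 2) := by
      have h := ENNReal.rpow_add_le_mul_rpow_add_rpow ‖a‖ₑ ‖b‖ₑ one_le_two
      norm_num at h
      exact h

lemma eLpNorm_two_sq_eq_lintegral {X E : Type*} [MeasurableSpace X] [NormedAddCommGroup E]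
    (μ : Measure X) (f : X → E) : eLpNorm f 2 μ ^ 2 = ∫⁻ x, ‖f x‖ₑ ^ 2 ∂μ := by
  simpa using eLpNorm_nnreal_pow_eq_lintegral (f := f) (μ := μ) (p := 2) two_ne_zero

lemma enorm_integral_sub_sq_le_lintegral {X E : Type*} [MeasurableSpace X] [NormedAddCommGroup E]
    [NormedSpace ℝ E] [CompleteSpace E] {ν : Measure X} [IsProbabilityMeasure ν] {f : X → E}
    (hf : AEStronglyMeasurable f ν) (c : E) :
    ‖(∫ x, f x ∂ν) - c‖ₑ ^ 2 ≤ ∫⁻ x, ‖f x - c‖ₑ ^ 2 ∂ν := by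
  have hfc : AEStronglyMeasurable (fun x => f x - c) ν := hf.sub aestronglyMeasurable_const
  rw [← eLpNorm_two_sq_eq_lintegral]
  rcases eq_or_ne (eLpNorm (fun x => f x - c) 2 ν) ∞ with htop | htop
  · simp [htop]
  have hint : Integrable (fun x => f x - c) ν :=
    MemLp.integrable (q := 2) one_le_two ⟨hfc, htop.lt_top⟩
  have hsub : ∫ x, (f x - c) ∂ν = (∫ x, f x ∂ν) - c := by
    have hf' : Integrable f ν :=
      (hint.add (integrable_const c)).congr (Eventually.of_forall fun x => sub_add_cancel _ _)
    simp [integral_sub hf' (integrable_const c)]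
  rw [← hsub]
  gcongr
  calc ‖∫ x, (f x - c) ∂ν‖ₑ ≤ ∫⁻ x, ‖f x - c‖ₑ ∂ν := enorm_integral_le_lintegral_enorm _
    _ = eLpNorm (fun x => f x - c) 1 ν := eLpNorm_one_eq_lintegral_enorm.symm
    _ ≤ eLpNorm (fun x => f x - c) 2 ν := eLpNorm_le_eLpNorm_of_exponent_le one_le_two hfc

lemma tendsto_lintegral_zero_of_tendsto_measure_compl {T Y : Type*} [MeasurableSpace Y]
    {l : Filter T} {k : Filter Y} {ν : T → Measure Y} {D : Y → ℝ≥0∞} {M : ℝ≥0∞} (hM : M ≠ ∞)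
    (hν1 : ∀ᶠ t in l, IsProbabilityMeasure (ν t)) (hDM : ∀ᶠ t in l, ∀ᵐ y ∂(ν t), D y ≤ M)
    (hν : ∀ s ∈ k, Tendsto (fun t => ν t sᶜ) l (𝓝 0)) (hD : Tendsto D k (𝓝 0)) :
    Tendsto (fun t => ∫⁻ y, D y ∂(ν t)) l (𝓝 0) := by
  refine tendsto_zero_of_forall_le_continuous_add continuous_id rfl fun η hη => ?_
  have hs := ENNReal.tendsto_nhds_zero.1 hD η (pos_iff_ne_zero.2 hη)
  set s : Set Y := {y | D y ≤ η}
  refine ⟨fun t => M * ν t sᶜ,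
    by simpa using ENNReal.Tendsto.const_mul (hν s hs) (Or.inr hM), ?_⟩
  filter_upwards [hν1, hDM] with t ht htM
  calc ∫⁻ y, D y ∂(ν t) ≤ ∫⁻ y, (η + sᶜ.indicator (fun _ => M) y) ∂(ν t) := by
        refine lintegral_mono_ae (htM.mono fun y hy => ?_)
        by_cases hys : y ∈ s
        · exact le_add_right hys
        · simpa [hys] using le_add_left hy
    _ = η + ∫⁻ y, sᶜ.indicator (fun _ => M) y ∂(ν t) := by
        rw [lintegral_add_left measurable_const, lintegral_const, measure_univ, mul_one]
    _ ≤ η + M * ν t sᶜ := by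
        gcongr
        exact lintegral_indicator_const_le _ _

section SymmetricMarkovDensity

variable {X T E : Type*} [MeasurableSpace X] {μ : Measure X} {κ : X → X → ℝ≥0∞}

/-- `κ` is the transition density, with respect to `μ`, of a Markov kernel that is reversible for
`μ`. -/
structure IsSymmMarkovDensity (κ : X → X → ℝ≥0∞) (μ : Measure X) : Prop where
  measurable : Measurable (Function.uncurry κ)
  symm : ∀ x y, κ x y = κ y x
  lintegral_eq_one : ∀ x, ∫⁻ y, κ x y ∂μ = 1

/-- The Dirichlet energy `∬ κ(x, y) ‖f y - f x‖² dμ(y) dμ(x)`, which for a symmetric Markov density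
controls the distance in `L²(μ)` from `f` to its average against `κ`. -/
noncomputable def kernelEnergy [NormedAddCommGroup E] (κ : X → X → ℝ≥0∞) (μ : Measure X)
    (f : X → E) : ℝ≥0∞ :=
  ∫⁻ z, κ z.1 z.2 * ‖f z.2 - f z.1‖ₑ ^ 2 ∂(μ.prod μ)

lemma kernelEnergy_add_le [NormedAddCommGroup E] [MeasurableSpace E] [BorelSpace E]
    [SecondCountableTopology E] (hκ : Measurable (Function.uncurry κ)) {f g : X → E}
    (hf : Measurable f) (hg : Measurable g) :
    kernelEnergy κ μ (f + g) ≤ 2 * (kernelEnergy κ μ f + kernelEnergy κ μ g) := by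
  rw [kernelEnergy, kernelEnergy, kernelEnergy, ← lintegral_add_left (by fun_prop),
    ← lintegral_const_mul _ (by fun_prop)]
  refine lintegral_mono fun z => ?_
  rw [← mul_add, mul_left_comm, Pi.add_apply, Pi.add_apply, add_sub_add_comm]
  gcongr
  exact enorm_add_sq_le _ _

/-- The mixture of the family of transition densities `κ τ` when `τ` has law `ν`. For `ν` the law
of a subordinator at a fixed time, this is the subordinated transition density. -/
noncomputable def mixtureDensity {Y : Type*} [MeasurableSpace Y] (κ : Y → X → X → ℝ≥0∞)
    (ν : Measure Y) (x y : X) : ℝ≥0∞ :=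
  ∫⁻ τ, κ τ x y ∂ν

namespace IsSymmMarkovDensity

lemma lintegral_mul_comp_fst [SFinite μ] (hκ : IsSymmMarkovDensity κ μ) {h : X → ℝ≥0∞}
    (hh : Measurable h) : ∫⁻ z, κ z.1 z.2 * h z.1 ∂(μ.prod μ) = ∫⁻ x, h x ∂μ := by
  have hκm := hκ.measurable
  rw [lintegral_prod _ (by fun_prop)]
  refine lintegral_congr fun x => ?_
  dsimp only
  rw [lintegral_mul_const _ (by fun_prop), hκ.lintegral_eq_one, one_mul]

lemma lintegral_mul_comp_swap [SFinite μ] (hκ : IsSymmMarkovDensity κ μ) (F : X × X → ℝ≥0∞) :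
    ∫⁻ z, κ z.1 z.2 * F z.swap ∂(μ.prod μ) = ∫⁻ z, κ z.1 z.2 * F z ∂(μ.prod μ) := by
  rw [← lintegral_prod_swap]
  simp only [Prod.fst_swap, Prod.snd_swap, Prod.swap_swap, hκ.symm]

lemma lintegral_mul_comp_snd [SFinite μ] (hκ : IsSymmMarkovDensity κ μ) {h : X → ℝ≥0∞}
    (hh : Measurable h) : ∫⁻ z, κ z.1 z.2 * h z.2 ∂(μ.prod μ) = ∫⁻ x, h x ∂μ :=
  (hκ.lintegral_mul_comp_swap fun z => h z.1).trans (hκ.lintegral_mul_comp_fst hh)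

variable [NormedAddCommGroup E]

lemma lintegral_enorm_integral_sub_sq_le_kernelEnergy [SFinite μ] [MeasurableSpace E]
    [BorelSpace E] [SecondCountableTopology E] [NormedSpace ℝ E] [CompleteSpace E]
    (hκ : IsSymmMarkovDensity κ μ) {f : X → E} (hf : Measurable f) :
    ∫⁻ x, ‖(∫ y, (κ x y).toReal • f y ∂μ) - f x‖ₑ ^ 2 ∂μ ≤ kernelEnergy κ μ f := by
  have hκm := hκ.measurable
  rw [kernelEnergy, lintegral_prod _ (by fun_prop)]
  refine lintegral_mono fun x => ?_
  have hκx : Measurable (κ x) := by fun_prop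
  have : IsProbabilityMeasure (μ.withDensity (κ x)) := ⟨by simpa using hκ.lintegral_eq_one x⟩
  have hJensen := enorm_integral_sub_sq_le_lintegral (ν := μ.withDensity (κ x))
    hf.aestronglyMeasurable (f x)
  rwa [integral_withDensity_eq_integral_toReal_smul hκx
      (ae_lt_top hκx (by simp [hκ.lintegral_eq_one])),
    lintegral_withDensity_eq_lintegral_mul _ hκx (by fun_prop)] at hJensen

lemma lintegral_mul_enorm_sub_sq_le [PseudoEMetricSpace X] [OpensMeasurableSpace X]
    (hκ : IsSymmMarkovDensity κ μ) {g : X → E} {η C : ℝ≥0∞} {n : ℕ}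
    (hle : ∀ x y, ‖g y - g x‖ₑ ^ 2 ≤ η + C * edist x y ^ n) (x : X) :
    ∫⁻ y, κ x y * ‖g y - g x‖ₑ ^ 2 ∂μ ≤ η + C * ∫⁻ y, κ x y * edist x y ^ n ∂μ := by
  have hκm := hκ.measurable
  calc ∫⁻ y, κ x y * ‖g y - g x‖ₑ ^ 2 ∂μ
      ≤ ∫⁻ y, (κ x y * η + C * (κ x y * edist x y ^ n)) ∂μ := by
        refine lintegral_mono fun y => ?_
        rw [mul_left_comm, ← mul_add]
        gcongr
        exact hle x y
    _ = η + C * ∫⁻ y, κ x y * edist x y ^ n ∂μ := by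
        rw [lintegral_add_left (by fun_prop), lintegral_mul_const _ (by fun_prop),
          lintegral_const_mul _ (by fun_prop), hκ.lintegral_eq_one, one_mul]

variable [MeasurableSpace E] [BorelSpace E] [SecondCountableTopology E]

lemma kernelEnergy_le_four_mul_eLpNorm_sq [SFinite μ] (hκ : IsSymmMarkovDensity κ μ) {f : X → E}
    (hf : Measurable f) : kernelEnergy κ μ f ≤ 4 * eLpNorm f 2 μ ^ 2 := by
  have hκm := hκ.measurable
  calc kernelEnergy κ μ f
      ≤ ∫⁻ z, 2 * (κ z.1 z.2 * ‖f z.2‖ₑ ^ 2 + κ z.1 z.2 * ‖f z.1‖ₑ ^ 2) ∂(μ.prod μ) := by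
        refine lintegral_mono fun z => ?_
        rw [← mul_add, mul_left_comm]
        gcongr
        simpa [sub_eq_add_neg] using enorm_add_sq_le (f z.2) (-f z.1)
    _ = 2 * (eLpNorm f 2 μ ^ 2 + eLpNorm f 2 μ ^ 2) := by
        rw [lintegral_const_mul _ (by fun_prop), lintegral_add_left (by fun_prop),
          hκ.lintegral_mul_comp_snd (h := fun x => ‖f x‖ₑ ^ 2) (by fun_prop),
          hκ.lintegral_mul_comp_fst (h := fun x => ‖f x‖ₑ ^ 2) (by fun_prop),
          eLpNorm_two_sq_eq_lintegral]
    _ = 4 * eLpNorm f 2 μ ^ 2 := by ring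

lemma kernelEnergy_le_two_mul_setLIntegral [SFinite μ] (hκ : IsSymmMarkovDensity κ μ) {f : X → E}
    (hf : Measurable f) {K : Set X} (hK : MeasurableSet K) (hfK : ∀ x ∉ K, f x = 0) :
    kernelEnergy κ μ f ≤ 2 * ∫⁻ x in K, ∫⁻ y, κ x y * ‖f y - f x‖ₑ ^ 2 ∂μ ∂μ := by
  have hκm := hκ.measurable
  let F : X × X → ℝ≥0∞ := fun z => K.indicator 1 z.1 * ‖f z.2 - f z.1‖ₑ ^ 2
  have hF : Measurable F :=
    ((measurable_one.indicator hK).comp measurable_fst).mul (by fun_prop)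
  calc kernelEnergy κ μ f
      ≤ ∫⁻ z, (κ z.1 z.2 * F z + κ z.1 z.2 * F z.swap) ∂(μ.prod μ) := by
        refine lintegral_mono fun z => ?_
        rw [← mul_add]
        gcongr
        by_cases h1 : z.1 ∈ K
        · simp [F, h1]
        by_cases h2 : z.2 ∈ K
        · simp [F, h2, enorm_sub_rev]
        · simp [hfK _ h1, hfK _ h2]
    _ = 2 * ∫⁻ z, κ z.1 z.2 * F z ∂(μ.prod μ) := by
        rw [lintegral_add_left (by fun_prop), hκ.lintegral_mul_comp_swap, two_mul]
    _ = 2 * ∫⁻ x in K, ∫⁻ y, κ x y * ‖f y - f x‖ₑ ^ 2 ∂μ ∂μ := by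
        rw [lintegral_prod _ (by fun_prop), ← lintegral_indicator hK]
        congr 2 with x
        by_cases hx : x ∈ K <;> simp [F, hx]

section Convergence

variable [SFinite μ] {l : Filter T} {κ : T → X → X → ℝ≥0∞}

lemma tendsto_kernelEnergy_of_approx (hκ : ∀ᶠ t in l, IsSymmMarkovDensity (κ t) μ) {f : X → E}
    (hf : Measurable f)
    (happrox : ∀ ε ≠ 0, ∃ g : X → E, Measurable g ∧ eLpNorm (f - g) 2 μ ≤ ε ∧
      Tendsto (fun t => kernelEnergy (κ t) μ g) l (𝓝 0)) :
    Tendsto (fun t => kernelEnergy (κ t) μ f) l (𝓝 0) := by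
  refine tendsto_zero_of_forall_le_continuous_add (φ := fun ε => 2 * (4 * ε ^ 2))
    (by fun_prop (disch := simp)) (by simp) fun ε hε => ?_
  obtain ⟨g, hg, hfg, hlim⟩ := happrox ε hε
  refine ⟨fun t => 2 * kernelEnergy (κ t) μ g,
    by simpa using ENNReal.Tendsto.const_mul (a := 2) hlim (Or.inr (by simp)), ?_⟩
  filter_upwards [hκ] with t ht
  calc kernelEnergy (κ t) μ f = kernelEnergy (κ t) μ ((f - g) + g) := by rw [sub_add_cancel]
    _ ≤ 2 * (kernelEnergy (κ t) μ (f - g) + kernelEnergy (κ t) μ g) :=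
        kernelEnergy_add_le ht.measurable (hf.sub hg) hg
    _ ≤ 2 * (4 * eLpNorm (f - g) 2 μ ^ 2 + kernelEnergy (κ t) μ g) := by
        gcongr
        exact ht.kernelEnergy_le_four_mul_eLpNorm_sq (hf.sub hg)
    _ ≤ 2 * (4 * ε ^ 2) + 2 * kernelEnergy (κ t) μ g := by rw [mul_add]; gcongr

variable [PseudoMetricSpace X] [BorelSpace X]

lemma tendsto_kernelEnergy_of_hasCompactSupport [IsFiniteMeasureOnCompacts μ]
    (hκ : ∀ᶠ t in l, IsSymmMarkovDensity (κ t) μ) {g : X → E} (hg : Continuous g)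
    (hgc : HasCompactSupport g) {n : ℕ} {V : T → ℝ≥0∞} (hV : Tendsto V l (𝓝 0))
    (hmoment : ∀ᶠ t in l, ∀ᵐ x ∂(μ.restrict (tsupport g)),
      ∫⁻ y, κ t x y * edist x y ^ n ∂μ ≤ V t) :
    Tendsto (fun t => kernelEnergy (κ t) μ g) l (𝓝 0) := by
  set K := tsupport g
  have hμK : μ K ≠ ∞ := hgc.isCompact.measure_lt_top.ne
  obtain ⟨M, hM⟩ := hgc.exists_bound_of_continuous hg
  have hM' (x : X) : ‖g x‖ₑ ≤ M.toNNReal := by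
    rw [← ofReal_norm]
    exact ENNReal.ofReal_le_ofReal (hM x)
  refine tendsto_zero_of_forall_le_continuous_add (φ := fun η => 2 * (μ K * η ^ 2))
    (by fun_prop (disch := simp)) (by simp) fun η hη => ?_
  obtain ⟨C, hC, hle⟩ := exists_enorm_sub_sq_le_add_mul_edist_pow
    (hgc.uniformContinuous_of_continuous hg) hM' n hη
  refine ⟨fun t => 2 * μ K * C * V t,
    by simpa using ENNReal.Tendsto.const_mul hV (Or.inr (by finiteness)), ?_⟩
  filter_upwards [hκ, hmoment] with t ht htV
  calc kernelEnergy (κ t) μ g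
      ≤ 2 * ∫⁻ x in K, ∫⁻ y, κ t x y * ‖g y - g x‖ₑ ^ 2 ∂μ ∂μ :=
        ht.kernelEnergy_le_two_mul_setLIntegral hg.measurable (isClosed_tsupport g).measurableSet
          fun x => image_eq_zero_of_notMem_tsupport
    _ ≤ 2 * ∫⁻ x in K, (η ^ 2 + C * V t) ∂μ := by
        gcongr 2 * ?_
        refine lintegral_mono_ae (htV.mono fun x hx => ?_)
        exact (ht.lintegral_mul_enorm_sub_sq_le hle x).trans (by gcongr)
    _ = 2 * (μ K * η ^ 2) + 2 * μ K * C * V t := by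
        rw [setLIntegral_const]
        ring

theorem tendsto_kernelEnergy_of_moment [LocallyCompactSpace X] [μ.Regular]
    [NormedSpace ℝ E] (hκ : ∀ᶠ t in l, IsSymmMarkovDensity (κ t) μ) (n : ℕ)
    (hmoment : ∀ K, IsCompact K → ∃ V : T → ℝ≥0∞, Tendsto V l (𝓝 0) ∧
      ∀ᶠ t in l, ∀ᵐ x ∂(μ.restrict K), ∫⁻ y, κ t x y * edist x y ^ n ∂μ ≤ V t)
    {f : X → E} (hf : Measurable f) (hf2 : MemLp f 2 μ) :
    Tendsto (fun t => kernelEnergy (κ t) μ f) l (𝓝 0) := by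
  refine tendsto_kernelEnergy_of_approx hκ hf fun ε hε => ?_
  obtain ⟨g, hgc, hfg, hg, -⟩ := hf2.exists_hasCompactSupport_eLpNorm_sub_le (by simp) hε
  obtain ⟨V, hV, hle⟩ := hmoment _ hgc.isCompact
  exact ⟨g, hg.measurable, hfg, tendsto_kernelEnergy_of_hasCompactSupport hκ hg hgc hV hle⟩

end Convergence

section Mixture

variable {Y : Type*} [MeasurableSpace Y] [SFinite μ] {κ : Y → X → X → ℝ≥0∞} {ν : Measure Y}

lemma mixtureDensity (hκm : Measurable fun z : Y × X × X => κ z.1 z.2.1 z.2.2)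
    [IsProbabilityMeasure ν] (hκ : ∀ᵐ τ ∂ν, IsSymmMarkovDensity (κ τ) μ) :
    IsSymmMarkovDensity (mixtureDensity κ ν) μ where
  measurable := Measurable.lintegral_prod_right' (f := fun z : (X × X) × Y => κ z.2 z.1.1 z.1.2)
    (hκm.comp measurable_swap)
  symm x y := lintegral_congr_ae (hκ.mono fun τ hτ => hτ.symm x y)
  lintegral_eq_one x := by
    calc ∫⁻ y, ∫⁻ τ, κ τ x y ∂ν ∂μ = ∫⁻ τ, ∫⁻ y, κ τ x y ∂μ ∂ν :=
          lintegral_lintegral_swap (by fun_prop)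
      _ = ∫⁻ _, 1 ∂ν := lintegral_congr_ae (hκ.mono fun τ hτ => hτ.lintegral_eq_one x)
      _ = 1 := by simp

end Mixture

end IsSymmMarkovDensity

lemma kernelEnergy_mixtureDensity {Y : Type*} [MeasurableSpace Y] [SFinite μ]
    [NormedAddCommGroup E] [MeasurableSpace E] [BorelSpace E] [SecondCountableTopology E]
    {κ : Y → X → X → ℝ≥0∞} (hκ : Measurable fun z : Y × X × X => κ z.1 z.2.1 z.2.2)
    {ν : Measure Y} [SFinite ν] {f : X → E} (hf : Measurable f) :
    kernelEnergy (mixtureDensity κ ν) μ f = ∫⁻ τ, kernelEnergy (κ τ) μ f ∂ν := by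
  calc kernelEnergy (mixtureDensity κ ν) μ f
      = ∫⁻ z, ∫⁻ τ, κ τ z.1 z.2 * ‖f z.2 - f z.1‖ₑ ^ 2 ∂ν ∂(μ.prod μ) := by
        refine lintegral_congr fun z => ?_
        rw [mixtureDensity, lintegral_mul_const _ (by fun_prop)]
    _ = ∫⁻ τ, kernelEnergy (κ τ) μ f ∂ν := lintegral_lintegral_swap (by fun_prop)

end SymmetricMarkovDensity

section BesselMeasure

variable {ζ : ℝ}

/-- The reference measure `s ^ (2 * ζ) ds` on the half-line, as a measure on `ℝ` that does not
charge `(-∞, 0]`. -/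
noncomputable def besselMeasure (ζ : ℝ) : Measure ℝ :=
  (volume.restrict (Ioi 0)).withDensity fun s => ENNReal.ofReal (s ^ (2 * ζ))

instance : SFinite (besselMeasure ζ) := by
  unfold besselMeasure
  infer_instance

lemma ae_besselMeasure_pos : ∀ᵐ s ∂(besselMeasure ζ), 0 < s :=
  (withDensity_absolutelyContinuous _ _).ae_le (ae_restrict_mem measurableSet_Ioi)

lemma integrable_besselMeasure_iff {h : ℝ → ℝ} :
    Integrable h (besselMeasure ζ) ↔ IntegrableOn (fun s => h s * s ^ (2 * ζ)) (Ioi 0) := by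
  rw [besselMeasure, integrable_withDensity_iff_integrable_smul' (by fun_prop) (by simp)]
  refine integrable_congr (ae_restrict_of_forall_mem measurableSet_Ioi fun s hs => ?_)
  simp only [smul_eq_mul, ENNReal.toReal_ofReal (rpow_nonneg (le_of_lt hs) _), mul_comm]

lemma integral_besselMeasure (h : ℝ → ℝ) :
    ∫ s, h s ∂(besselMeasure ζ) = ∫ s in Ioi 0, h s * s ^ (2 * ζ) := by
  rw [besselMeasure, integral_withDensity_eq_integral_toReal_smul (by fun_prop) (by simp)]
  refine setIntegral_congr_fun measurableSet_Ioi fun s hs => ?_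
  simp only [smul_eq_mul, ENNReal.toReal_ofReal (rpow_nonneg (le_of_lt hs) _), mul_comm]

lemma isFiniteMeasureOnCompacts_besselMeasure (hζ : -1 / 2 < ζ) :
    IsFiniteMeasureOnCompacts (besselMeasure ζ) where
  lt_top_of_isCompact K hK := by
    obtain ⟨R, hR⟩ := hK.bddAbove
    have hint : IntegrableOn (fun s : ℝ => s ^ (2 * ζ)) (Ioc 0 (max R 0)) :=
      (intervalIntegrable_iff_integrableOn_Ioc_of_le (le_max_right _ _)).1
        (intervalIntegral.intervalIntegrable_rpow' (by linarith))
    refine lt_of_le_of_lt ?_ hint.lintegral_lt_top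
    rw [besselMeasure, withDensity_apply _ hK.measurableSet,
      Measure.restrict_restrict hK.measurableSet]
    exact lintegral_mono_set fun s hs => ⟨hs.2, (hR hs.1).trans (le_max_left _ _)⟩

end BesselMeasure

section PoissonMoments

/-- The mass at `n` of the Poisson law of parameter `x`, for a real `x` rather than the `ℝ≥0` of
`ProbabilityTheory.poissonPMFReal`. -/
noncomputable def poissonWeight (x : ℝ) (n : ℕ) : ℝ :=
  exp (-x) * x ^ n / n.factorial

lemma hasSum_poissonWeight_mul_descFactorial (x : ℝ) (k : ℕ) :
    HasSum (fun n => poissonWeight x n * n.descFactorial k) (x ^ k) := by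
  have hmass : HasSum (poissonWeight x) 1 := by
    have h := (NormedSpace.expSeries_div_hasSum_exp x).mul_left (exp (-x))
    rw [← exp_eq_exp_ℝ, ← exp_add, neg_add_cancel, exp_zero] at h
    simp only [← mul_div_assoc] at h
    exact h
  have hshift (n : ℕ) :
      poissonWeight x (n + k) * (n + k).descFactorial k = x ^ k * poissonWeight x n := by
    have hfact : (((n + k).factorial : ℕ) : ℝ) = n.factorial * (n + k).descFactorial k := by
      rw [← Nat.factorial_mul_descFactorial (Nat.le_add_left k n), Nat.add_sub_cancel, Nat.cast_mul]
    have hdesc : ((n + k).descFactorial k : ℝ) ≠ 0 :=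
      Nat.cast_ne_zero.2 (Nat.descFactorial_pos.2 (Nat.le_add_left k n)).ne'
    rw [poissonWeight, poissonWeight, hfact]
    field_simp
    ring
  have hzero : ∑ n ∈ Finset.range k, poissonWeight x n * n.descFactorial k = 0 :=
    Finset.sum_eq_zero fun n hn => by
      rw [Nat.descFactorial_of_lt (Finset.mem_range.1 hn), Nat.cast_zero, mul_zero]
  rw [← hasSum_nat_add_iff' k, hzero, sub_zero]
  simpa only [hshift, mul_one] using hmass.mul_left (x ^ k)

-- This is `𝔼 (G - x)²` for `G` of law Gamma(`N + b`) given `N`, with `N` Poisson of parameter `x`.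
lemma hasSum_poissonWeight_mul_gamma_variance (x b : ℝ) :
    HasSum (fun n : ℕ => poissonWeight x n * ((n + b) * (n + b + 1) - 2 * x * (n + b) + x ^ 2))
      (2 * x + b * (b + 1)) := by
  have h0 := hasSum_poissonWeight_mul_descFactorial x 0
  have h1 := hasSum_poissonWeight_mul_descFactorial x 1
  have h2 := hasSum_poissonWeight_mul_descFactorial x 2
  convert! (h2.add (h1.mul_left (2 * b + 2 - 2 * x))).add
    (h0.mul_left (b ^ 2 + b - 2 * x * b + x ^ 2)) using 1
  · ext n
    rw [Nat.cast_descFactorial_two, Nat.descFactorial_one, Nat.descFactorial_zero, Nat.cast_one]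
    ring
  · ring

end PoissonMoments

section GammaMixture

variable {ζ τ : ℝ}

lemma exp_neg_mul_pow_mul_rpow_eq (m : ℕ) {s : ℝ} (hs : 0 < s) :
    exp (-(s ^ 2 / (4 * τ))) * (s ^ 2 / (4 * τ)) ^ m * s ^ (2 * ζ) =
      ((4 * τ) ^ m)⁻¹ * (s ^ (2 * (m + ζ)) * exp (-(4 * τ)⁻¹ * s ^ (2 : ℝ))) := by
  have hpow : s ^ (2 * (m + ζ)) = s ^ (2 * ζ) * (s ^ 2) ^ m := by
    rw [← pow_mul, ← rpow_natCast, ← rpow_add hs]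
    congr 1
    push_cast
    ring
  have hexp : -(4 * τ)⁻¹ * s ^ (2 : ℝ) = -(s ^ 2 / (4 * τ)) := by
    rw [rpow_two]
    ring
  rw [hpow, hexp, div_pow]
  ring

lemma integrable_exp_neg_mul_pow_besselMeasure (hζ : -1 / 2 < ζ) (hτ : 0 < τ) (m : ℕ) :
    Integrable (fun s => exp (-(s ^ 2 / (4 * τ))) * (s ^ 2 / (4 * τ)) ^ m) (besselMeasure ζ) := by
  have : (0 : ℝ) ≤ m := m.cast_nonneg
  rw [integrable_besselMeasure_iff]
  refine IntegrableOn.congr_fun (Integrable.const_mul (integrableOn_rpow_mul_exp_neg_mul_rpow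
    (s := 2 * (m + ζ)) (by linarith) two_pos (by positivity : 0 < (4 * τ)⁻¹)) _)
    (fun s hs => (exp_neg_mul_pow_mul_rpow_eq m hs).symm) measurableSet_Ioi

lemma integral_exp_neg_mul_pow_besselMeasure (hζ : -1 / 2 < ζ) (hτ : 0 < τ) (m : ℕ) :
    ∫ s, exp (-(s ^ 2 / (4 * τ))) * (s ^ 2 / (4 * τ)) ^ m ∂(besselMeasure ζ) =
      (4 * τ) ^ (ζ + 1 / 2) / 2 * Gamma (m + (ζ + 1 / 2)) := by
  have : (0 : ℝ) ≤ m := m.cast_nonneg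
  have h4τ : 0 < 4 * τ := by positivity
  have hscale : (4 * τ)⁻¹ ^ (-(2 * (m + ζ) + 1) / 2) = (4 * τ) ^ m * (4 * τ) ^ (ζ + 1 / 2) := by
    rw [inv_rpow h4τ.le, ← rpow_neg h4τ.le, ← rpow_natCast, ← rpow_add h4τ]
    congr 1
    ring
  rw [integral_besselMeasure, setIntegral_congr_fun measurableSet_Ioi
    (fun s hs => exp_neg_mul_pow_mul_rpow_eq m hs), integral_const_mul,
    integral_rpow_mul_exp_neg_mul_rpow two_pos (by linarith) (by positivity), hscale,
    show (2 * (m + ζ) + 1) / 2 = m + (ζ + 1 / 2) by ring]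
  field_simp

/-- The density with respect to `besselMeasure ζ` of the law of `√(4τG)`, where `G` has the Gamma
law with shape `n + ζ + 1/2` and rate `1`. -/
noncomputable def scaledChiDensity (ζ τ : ℝ) (n : ℕ) (s : ℝ) : ℝ :=
  2 / (4 * τ) ^ (ζ + 1 / 2) / Gamma (n + (ζ + 1 / 2)) *
    (exp (-(s ^ 2 / (4 * τ))) * (s ^ 2 / (4 * τ)) ^ n)

lemma Gamma_add_one_div_self {b : ℝ} (hb : 0 < b) : Gamma (b + 1) / Gamma b = b := by
  rw [Gamma_add_one hb.ne', mul_div_cancel_right₀ _ (Gamma_pos_of_pos hb).ne']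

lemma Gamma_add_two_div_self {b : ℝ} (hb : 0 < b) : Gamma (b + 2) / Gamma b = (b + 1) * b := by
  rw [← one_add_one_eq_two, ← add_assoc, Gamma_add_one (by positivity), mul_div_assoc,
    Gamma_add_one_div_self hb]

lemma Gamma_natCast_add_half_pos (hζ : -1 / 2 < ζ) (n : ℕ) : 0 < Gamma (n + (ζ + 1 / 2)) :=
  Gamma_pos_of_pos (by linarith [n.cast_nonneg (α := ℝ)])

lemma scaledChiDensity_nonneg (hζ : -1 / 2 < ζ) (hτ : 0 < τ) (n : ℕ) (s : ℝ) :
    0 ≤ scaledChiDensity ζ τ n s := by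
  have hΓ := Gamma_natCast_add_half_pos hζ n
  unfold scaledChiDensity
  positivity

lemma scaledChiDensity_mul_pow (n j : ℕ) (s : ℝ) :
    scaledChiDensity ζ τ n s * (s ^ 2 / (4 * τ)) ^ j =
      2 / (4 * τ) ^ (ζ + 1 / 2) / Gamma (n + (ζ + 1 / 2)) *
        (exp (-(s ^ 2 / (4 * τ))) * (s ^ 2 / (4 * τ)) ^ (n + j)) := by
  rw [scaledChiDensity, pow_add]
  ring

lemma integrable_scaledChiDensity_mul_pow (hζ : -1 / 2 < ζ) (hτ : 0 < τ) (n j : ℕ) :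
    Integrable (fun s => scaledChiDensity ζ τ n s * (s ^ 2 / (4 * τ)) ^ j) (besselMeasure ζ) := by
  simp only [scaledChiDensity_mul_pow]
  exact (integrable_exp_neg_mul_pow_besselMeasure hζ hτ _).const_mul _

lemma integral_scaledChiDensity_mul_pow (hζ : -1 / 2 < ζ) (hτ : 0 < τ) (n j : ℕ) :
    ∫ s, scaledChiDensity ζ τ n s * (s ^ 2 / (4 * τ)) ^ j ∂(besselMeasure ζ) =
      Gamma (n + (ζ + 1 / 2) + j) / Gamma (n + (ζ + 1 / 2)) := by
  have : 0 < Gamma (n + (ζ + 1 / 2)) := Gamma_natCast_add_half_pos hζ n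
  have : 0 < (4 * τ) ^ (ζ + 1 / 2) := by positivity
  simp only [scaledChiDensity_mul_pow]
  rw [integral_const_mul, integral_exp_neg_mul_pow_besselMeasure hζ hτ, Nat.cast_add,
    add_right_comm]
  field_simp

lemma integrable_scaledChiDensity (hζ : -1 / 2 < ζ) (hτ : 0 < τ) (n : ℕ) :
    Integrable (scaledChiDensity ζ τ n) (besselMeasure ζ) := by
  simpa using integrable_scaledChiDensity_mul_pow hζ hτ n 0

lemma integral_scaledChiDensity (hζ : -1 / 2 < ζ) (hτ : 0 < τ) (n : ℕ) :
    ∫ s, scaledChiDensity ζ τ n s ∂(besselMeasure ζ) = 1 := by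
  have h := integral_scaledChiDensity_mul_pow hζ hτ n 0
  rw [Nat.cast_zero, add_zero, div_self (Gamma_natCast_add_half_pos hζ n).ne'] at h
  simpa only [pow_zero, mul_one] using h

lemma scaledChiDensity_mul_sq_sub_sq (hτ : 0 < τ) (n : ℕ) (r s : ℝ) :
    scaledChiDensity ζ τ n s * (s ^ 2 - r ^ 2) ^ 2 =
      (4 * τ) ^ 2 * (scaledChiDensity ζ τ n s * (s ^ 2 / (4 * τ)) ^ 2
        - 2 * (r ^ 2 / (4 * τ)) * (scaledChiDensity ζ τ n s * (s ^ 2 / (4 * τ)) ^ 1)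
        + (r ^ 2 / (4 * τ)) ^ 2 * scaledChiDensity ζ τ n s) := by
  field_simp
  ring

lemma integrable_scaledChiDensity_mul_sq_sub_sq (hζ : -1 / 2 < ζ) (hτ : 0 < τ) (n : ℕ) (r : ℝ) :
    Integrable (fun s => scaledChiDensity ζ τ n s * (s ^ 2 - r ^ 2) ^ 2) (besselMeasure ζ) := by
  have hint := integrable_scaledChiDensity_mul_pow hζ hτ n
  simp only [scaledChiDensity_mul_sq_sub_sq hτ]
  exact (((hint 2).sub ((hint 1).const_mul _)).add
    ((integrable_scaledChiDensity hζ hτ n).const_mul _)).const_mul _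

lemma integral_scaledChiDensity_mul_sq_sub_sq (hζ : -1 / 2 < ζ) (hτ : 0 < τ) (n : ℕ) (r : ℝ) :
    ∫ s, scaledChiDensity ζ τ n s * (s ^ 2 - r ^ 2) ^ 2 ∂(besselMeasure ζ) =
      (4 * τ) ^ 2 * ((n + (ζ + 1 / 2)) * (n + (ζ + 1 / 2) + 1)
        - 2 * (r ^ 2 / (4 * τ)) * (n + (ζ + 1 / 2)) + (r ^ 2 / (4 * τ)) ^ 2) := by
  have hint := integrable_scaledChiDensity_mul_pow hζ hτ n
  have hb : 0 < n + (ζ + 1 / 2) := by linarith [n.cast_nonneg (α := ℝ)]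
  simp only [scaledChiDensity_mul_sq_sub_sq hτ]
  rw [integral_const_mul,
    integral_add (by exact (hint 2).sub ((hint 1).const_mul _))
      ((integrable_scaledChiDensity hζ hτ n).const_mul _),
    integral_sub (hint 2) ((hint 1).const_mul _), integral_const_mul, integral_const_mul,
    integral_scaledChiDensity_mul_pow hζ hτ, integral_scaledChiDensity_mul_pow hζ hτ,
    integral_scaledChiDensity hζ hτ, Nat.cast_one, Nat.cast_two,
    Gamma_add_one_div_self hb, Gamma_add_two_div_self hb]
  ring

end GammaMixture

section BesselKernel

variable {ζ τ : ℝ}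

/-- The Bessel heat kernel with values in `[0, ∞]`, written as a Poisson mixture of the densities
`scaledChiDensity ζ τ n`. It agrees with `besselHeat` on the half-line, see
`besselHeat_eq_toReal_besselKer`. -/
noncomputable def besselKer (ζ τ r s : ℝ) : ℝ≥0∞ :=
  ∑' n, ENNReal.ofReal (poissonWeight (r ^ 2 / (4 * τ)) n * scaledChiDensity ζ τ n s)

lemma poissonWeight_nonneg {x : ℝ} (hx : 0 ≤ x) (n : ℕ) : 0 ≤ poissonWeight x n := by
  unfold poissonWeight
  positivity

lemma poissonWeight_mul_scaledChiDensity (n : ℕ) (r s : ℝ) :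
    poissonWeight (r ^ 2 / (4 * τ)) n * scaledChiDensity ζ τ n s =
      2 / (4 * τ) ^ (ζ + 1 / 2) * exp (-(r ^ 2 / (4 * τ))) * exp (-(s ^ 2 / (4 * τ))) *
        ((r ^ 2 / (4 * τ) * (s ^ 2 / (4 * τ))) ^ n /
          (n.factorial * Gamma (n + (ζ + 1 / 2)))) := by
  rw [poissonWeight, scaledChiDensity, mul_pow]
  ring

lemma besselKer_comm (r s : ℝ) : besselKer ζ τ r s = besselKer ζ τ s r := by
  simp only [besselKer, poissonWeight_mul_scaledChiDensity, mul_comm (r ^ 2 / (4 * τ)),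
    mul_right_comm _ (exp (-(r ^ 2 / (4 * τ))))]

@[fun_prop]
lemma measurable_besselKer {X : Type*} [MeasurableSpace X] {a b c : X → ℝ} (ha : Measurable a)
    (hb : Measurable b) (hc : Measurable c) :
    Measurable fun x => besselKer ζ (a x) (b x) (c x) := by
  unfold besselKer poissonWeight scaledChiDensity
  exact Measurable.tsum fun n => by fun_prop

lemma summable_pow_div_factorial_mul_Gamma {b : ℝ} (hb : 0 < b) {x : ℝ} (hx : x ≠ 0) :
    Summable fun n : ℕ => x ^ n / (n.factorial * Gamma (n + b)) := by
  have hΓ (n : ℕ) : Gamma (n + b) ≠ 0 := (Gamma_pos_of_pos (by positivity)).ne'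
  have hratio (n : ℕ) :
      ‖x ^ (n + 1) / ((n + 1).factorial * Gamma ((n + 1 : ℕ) + b))‖ /
        ‖x ^ n / (n.factorial * Gamma (n + b))‖ = |x| * ((n + b)⁻¹ * ((n : ℝ) + 1)⁻¹) := by
    have hnb : 0 < n + b := by positivity
    rw [← norm_div, Nat.cast_succ, add_right_comm, Gamma_add_one hnb.ne', Nat.factorial_succ,
      ← abs_of_pos (show 0 < (n + b)⁻¹ * ((n : ℝ) + 1)⁻¹ by positivity), ← abs_mul,
      Real.norm_eq_abs]
    congr 1
    have := hΓ n
    push_cast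
    field_simp
    ring
  refine summable_of_ratio_test_tendsto_lt_one zero_lt_one
    (Eventually.of_forall fun n => div_ne_zero (pow_ne_zero n hx)
      (mul_ne_zero (Nat.cast_ne_zero.2 n.factorial_ne_zero) (hΓ n))) ?_
  have hb' : Tendsto (fun n : ℕ => ((n : ℝ) + b)⁻¹) atTop (𝓝 0) :=
    (tendsto_natCast_atTop_atTop.atTop_add tendsto_const_nhds).inv_tendsto_atTop
  have h1 : Tendsto (fun n : ℕ => ((n : ℝ) + 1)⁻¹) atTop (𝓝 0) :=
    (tendsto_natCast_atTop_atTop.atTop_add tendsto_const_nhds).inv_tendsto_atTop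
  simpa only [hratio, mul_zero] using (hb'.mul h1).const_mul |x|

lemma besselKer_lt_top (hζ : -1 / 2 < ζ) (hτ : 0 < τ) {r s : ℝ} (hr : 0 < r) (hs : 0 < s) :
    besselKer ζ τ r s < ∞ := by
  simp only [besselKer, poissonWeight_mul_scaledChiDensity]
  exact ((summable_pow_div_factorial_mul_Gamma (by linarith) (by positivity)).mul_left
    _).tsum_ofReal_lt_top

lemma besselHeat_eq_tsum (hτ : 0 < τ) {r s : ℝ} (hr : 0 < r) (hs : 0 < s) :
    besselHeat ζ τ r s =
      ∑' n, poissonWeight (r ^ 2 / (4 * τ)) n * scaledChiDensity ζ τ n s := by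
  rw [besselHeat, besselI, ← tsum_mul_left]
  refine tsum_congr fun n => ?_
  have h4τ : 0 < 4 * τ := by positivity
  have hbase : r * s / (2 * τ) / 2 = r * s / (4 * τ) := by ring
  have hpow : (r * s / (4 * τ)) ^ (2 * (n : ℝ) + (ζ - 1 / 2)) =
      (r ^ 2 / (4 * τ) * (s ^ 2 / (4 * τ))) ^ n *
        ((r * s) ^ (ζ - 1 / 2) / (4 * τ) ^ (ζ - 1 / 2)) := by
    rw [rpow_add (by positivity), rpow_mul (by positivity), rpow_natCast, rpow_two,
      div_rpow (by positivity) h4τ.le]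
    congr 2
    ring
  have hcancel : (r * s) ^ (1 / 2 - ζ) * (r * s) ^ (ζ - 1 / 2) = 1 := by
    rw [← rpow_add (by positivity), sub_add_sub_cancel, sub_self, rpow_zero]
  have hscale : (4 * τ) ^ (ζ + 1 / 2) = (4 * τ) ^ (ζ - 1 / 2) * (4 * τ) := by
    rw [← rpow_add_one h4τ.ne']
    congr 1
    ring
  have hexp : exp (-(r ^ 2 + s ^ 2) / (4 * τ)) =
      exp (-(r ^ 2 / (4 * τ))) * exp (-(s ^ 2 / (4 * τ))) := by
    rw [← exp_add]
    congr 1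
    ring
  rw [poissonWeight_mul_scaledChiDensity, hbase, hpow, hscale, hexp,
    show (n : ℝ) + (ζ - 1 / 2) + 1 = n + (ζ + 1 / 2) by ring]
  calc (r * s) ^ (1 / 2 - ζ) / (2 * τ) * (exp (-(r ^ 2 / (4 * τ))) * exp (-(s ^ 2 / (4 * τ)))) *
        ((r ^ 2 / (4 * τ) * (s ^ 2 / (4 * τ))) ^ n *
          ((r * s) ^ (ζ - 1 / 2) / (4 * τ) ^ (ζ - 1 / 2)) /
          (n.factorial * Gamma (n + (ζ + 1 / 2))))
      = (r * s) ^ (1 / 2 - ζ) * (r * s) ^ (ζ - 1 / 2) * (2 / ((4 * τ) ^ (ζ - 1 / 2) * (4 * τ)) *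
          exp (-(r ^ 2 / (4 * τ))) * exp (-(s ^ 2 / (4 * τ))) *
          ((r ^ 2 / (4 * τ) * (s ^ 2 / (4 * τ))) ^ n /
            (n.factorial * Gamma (n + (ζ + 1 / 2))))) := by ring
    _ = _ := by rw [hcancel, one_mul]

lemma besselHeat_eq_toReal_besselKer (hζ : -1 / 2 < ζ) (hτ : 0 < τ) {r s : ℝ} (hr : 0 < r)
    (hs : 0 < s) : besselHeat ζ τ r s = (besselKer ζ τ r s).toReal := by
  rw [besselHeat_eq_tsum hτ hr hs, besselKer, ENNReal.tsum_toReal_eq fun _ => ENNReal.ofReal_ne_top]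
  refine tsum_congr fun n => (ENNReal.toReal_ofReal ?_).symm
  exact mul_nonneg (poissonWeight_nonneg (by positivity) n) (scaledChiDensity_nonneg hζ hτ n s)

lemma lintegral_besselKer_mul (hζ : -1 / 2 < ζ) (hτ : 0 < τ) (r : ℝ) {h : ℝ → ℝ} (h0 : 0 ≤ h)
    (hint : ∀ n, Integrable (fun s => scaledChiDensity ζ τ n s * h s) (besselMeasure ζ)) {A : ℝ}
    (hA : HasSum (fun n => poissonWeight (r ^ 2 / (4 * τ)) n *
      ∫ s, scaledChiDensity ζ τ n s * h s ∂(besselMeasure ζ)) A) :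
    ∫⁻ s, besselKer ζ τ r s * ENNReal.ofReal (h s) ∂(besselMeasure ζ) = ENNReal.ofReal A := by
  have hw (n : ℕ) : 0 ≤ poissonWeight (r ^ 2 / (4 * τ)) n :=
    poissonWeight_nonneg (by positivity) n
  have hqh (n : ℕ) (s : ℝ) : 0 ≤ scaledChiDensity ζ τ n s * h s :=
    mul_nonneg (scaledChiDensity_nonneg hζ hτ n s) (h0 s)
  calc ∫⁻ s, besselKer ζ τ r s * ENNReal.ofReal (h s) ∂(besselMeasure ζ)
      = ∫⁻ s, ∑' n, ENNReal.ofReal (poissonWeight (r ^ 2 / (4 * τ)) n *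
          (scaledChiDensity ζ τ n s * h s)) ∂(besselMeasure ζ) := by
        simp only [besselKer, ← ENNReal.tsum_mul_right, ← ENNReal.ofReal_mul' (h0 _), mul_assoc]
    _ = ∑' n, ∫⁻ s, ENNReal.ofReal (poissonWeight (r ^ 2 / (4 * τ)) n *
          (scaledChiDensity ζ τ n s * h s)) ∂(besselMeasure ζ) :=
        lintegral_tsum fun n => ((hint n).const_mul _).aemeasurable.ennreal_ofReal
    _ = ∑' n, ENNReal.ofReal (poissonWeight (r ^ 2 / (4 * τ)) n *
          ∫ s, scaledChiDensity ζ τ n s * h s ∂(besselMeasure ζ)) := by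
        refine tsum_congr fun n => ?_
        rw [← integral_const_mul, ofReal_integral_eq_lintegral_ofReal ((hint n).const_mul _)
          (Eventually.of_forall fun s => mul_nonneg (hw n) (hqh n s))]
    _ = ENNReal.ofReal A := by
        rw [← hA.tsum_eq, ENNReal.ofReal_tsum_of_nonneg
          (fun n => mul_nonneg (hw n) (integral_nonneg (hqh n))) hA.summable]

lemma isSymmMarkovDensity_besselKer (hζ : -1 / 2 < ζ) (hτ : 0 < τ) :
    IsSymmMarkovDensity (besselKer ζ τ) (besselMeasure ζ) where
  measurable := by
    unfold Function.uncurry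
    fun_prop
  symm := besselKer_comm
  lintegral_eq_one r := by
    simpa only [Pi.one_apply, ENNReal.ofReal_one, mul_one] using
      lintegral_besselKer_mul hζ hτ r (A := 1) zero_le_one
        (fun n => by simpa using integrable_scaledChiDensity hζ hτ n)
        (by simpa [integral_scaledChiDensity hζ hτ] using
          hasSum_poissonWeight_mul_descFactorial (r ^ 2 / (4 * τ)) 0)

lemma lintegral_besselKer_mul_sq_sub_sq (hζ : -1 / 2 < ζ) (hτ : 0 < τ) (r : ℝ) :
    ∫⁻ s, besselKer ζ τ r s * ENNReal.ofReal ((s ^ 2 - r ^ 2) ^ 2) ∂(besselMeasure ζ) =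
      ENNReal.ofReal (8 * τ * r ^ 2 + 16 * τ ^ 2 * ((ζ + 1 / 2) * (ζ + 3 / 2))) := by
  refine lintegral_besselKer_mul hζ hτ r (fun s => sq_nonneg _)
    (fun n => integrable_scaledChiDensity_mul_sq_sub_sq hζ hτ n r) ?_
  simp only [integral_scaledChiDensity_mul_sq_sub_sq hζ hτ]
  convert! (hasSum_poissonWeight_mul_gamma_variance (r ^ 2 / (4 * τ)) (ζ + 1 / 2)).mul_left
    ((4 * τ) ^ 2) using 1
  · ext n
    ring
  · field_simp
    ring

lemma edist_pow_four_le_ofReal_sq_sub_sq {r s : ℝ} (hr : 0 ≤ r) (hs : 0 ≤ s) :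
    edist r s ^ 4 ≤ ENNReal.ofReal ((s ^ 2 - r ^ 2) ^ 2) := by
  rw [edist_dist, ← ENNReal.ofReal_pow dist_nonneg, dist_comm, Real.dist_eq]
  refine ENNReal.ofReal_le_ofReal ?_
  have hle : |s - r| ≤ s + r := abs_le.2 ⟨by linarith, by linarith⟩
  calc |s - r| ^ 4 = |s - r| ^ 2 * |s - r| ^ 2 := by ring
    _ ≤ |s - r| ^ 2 * (s + r) ^ 2 := by gcongr
    _ = (s ^ 2 - r ^ 2) ^ 2 := by rw [sq_abs]; ring

lemma lintegral_besselKer_mul_edist_pow_four_le (hζ : -1 / 2 < ζ) (hτ : 0 < τ) {r R : ℝ}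
    (hr : 0 ≤ r) (hrR : r ≤ R) :
    ∫⁻ s, besselKer ζ τ r s * edist r s ^ 4 ∂(besselMeasure ζ) ≤
      ENNReal.ofReal (8 * τ * R ^ 2 + 16 * τ ^ 2 * ((ζ + 1 / 2) * (ζ + 3 / 2))) := by
  calc ∫⁻ s, besselKer ζ τ r s * edist r s ^ 4 ∂(besselMeasure ζ)
      ≤ ∫⁻ s, besselKer ζ τ r s * ENNReal.ofReal ((s ^ 2 - r ^ 2) ^ 2) ∂(besselMeasure ζ) := by
        refine lintegral_mono_ae (ae_besselMeasure_pos.mono fun s hs => ?_)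
        gcongr
        exact edist_pow_four_le_ofReal_sq_sub_sq hr hs.le
    _ = ENNReal.ofReal (8 * τ * r ^ 2 + 16 * τ ^ 2 * ((ζ + 1 / 2) * (ζ + 3 / 2))) :=
        lintegral_besselKer_mul_sq_sub_sq hζ hτ r
    _ ≤ ENNReal.ofReal (8 * τ * R ^ 2 + 16 * τ ^ 2 * ((ζ + 1 / 2) * (ζ + 3 / 2))) := by gcongr

theorem tendsto_kernelEnergy_besselKer (hζ : -1 / 2 < ζ) {f : ℝ → ℝ} (hf : Measurable f)
    (hf2 : MemLp f 2 (besselMeasure ζ)) :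
    Tendsto (fun τ => kernelEnergy (besselKer ζ τ) (besselMeasure ζ) f) (𝓝[>] 0) (𝓝 0) := by
  have := isFiniteMeasureOnCompacts_besselMeasure hζ
  refine IsSymmMarkovDensity.tendsto_kernelEnergy_of_moment
    (eventually_nhdsWithin_of_forall fun τ hτ => isSymmMarkovDensity_besselKer hζ hτ) 4
    (fun K hK => ?_) hf hf2
  obtain ⟨R, hR⟩ := hK.bddAbove
  refine ⟨fun τ => ENNReal.ofReal (8 * τ * R ^ 2 + 16 * τ ^ 2 * ((ζ + 1 / 2) * (ζ + 3 / 2))),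
    tendsto_nhdsWithin_of_tendsto_nhds ((ENNReal.continuous_ofReal.comp (by fun_prop)).tendsto'
      _ _ (by simp)),
    eventually_nhdsWithin_of_forall fun τ hτ => ?_⟩
  filter_upwards [ae_restrict_of_ae ae_besselMeasure_pos, ae_restrict_mem hK.measurableSet]
    with r hr hrK
  exact lintegral_besselKer_mul_edist_pow_four_le hζ hτ hr.le (hR hrK)

end BesselKernel

section Subordination

variable {ζ α t : ℝ} {σ : ℝ → ℝ → ℝ}

/-- The law on `(0, ∞)` of the subordinator at time `t`, given its densities `σ`. -/
noncomputable def subordinatorLaw (σ : ℝ → ℝ → ℝ) (t : ℝ) : Measure ℝ :=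
  (volume.restrict (Ioi 0)).withDensity fun τ => ENNReal.ofReal (σ t τ)

instance : SFinite (subordinatorLaw σ t) := by
  unfold subordinatorLaw
  infer_instance

lemma ae_subordinatorLaw_pos : ∀ᵐ τ ∂(subordinatorLaw σ t), 0 < τ :=
  (withDensity_absolutelyContinuous _ _).ae_le (ae_restrict_mem measurableSet_Ioi)

namespace IsStableSubordinatorDensity

lemma integral_subordinatorLaw (hσ : IsStableSubordinatorDensity α σ) (ht : 0 < t) (h : ℝ → ℝ) :
    ∫ τ, h τ ∂(subordinatorLaw σ t) = ∫ τ in Ioi 0, h τ * σ t τ := by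
  have hσm := hσ.2.1 t ht
  rw [subordinatorLaw, integral_withDensity_eq_integral_toReal_smul (by fun_prop) (by simp)]
  refine setIntegral_congr_fun measurableSet_Ioi fun τ hτ => ?_
  simp only [smul_eq_mul, ENNReal.toReal_ofReal (hσ.1 t ht τ hτ), mul_comm]

lemma integral_exp_neg_mul_subordinatorLaw (hσ : IsStableSubordinatorDensity α σ) (ht : 0 < t)
    {l : ℝ} (hl : 0 ≤ l) :
    ∫ τ, exp (-τ * l) ∂(subordinatorLaw σ t) = exp (-t * l ^ (α / 2)) := by
  rw [hσ.integral_subordinatorLaw ht, hσ.2.2 t l ht hl]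

lemma isProbabilityMeasure_subordinatorLaw (hα : 0 < α) (hσ : IsStableSubordinatorDensity α σ)
    (ht : 0 < t) : IsProbabilityMeasure (subordinatorLaw σ t) := by
  have h := hσ.integral_exp_neg_mul_subordinatorLaw ht le_rfl
  simp only [mul_zero, exp_zero, zero_rpow (half_pos hα).ne', integral_const, smul_eq_mul,
    mul_one] at h
  exact isProbabilityMeasure_iff_real.2 (by simpa using h)

lemma integral_one_sub_exp_neg_subordinatorLaw (hα : 0 < α) (hσ : IsStableSubordinatorDensity α σ)
    (ht : 0 < t) : ∫ τ, (1 - exp (-τ)) ∂(subordinatorLaw σ t) = 1 - exp (-t) := by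
  have := hσ.isProbabilityMeasure_subordinatorLaw hα ht
  have h := hσ.integral_exp_neg_mul_subordinatorLaw ht zero_le_one
  simp only [mul_one, one_rpow] at h
  have hint : Integrable (fun τ => exp (-τ)) (subordinatorLaw σ t) :=
    Integrable.of_integral_ne_zero (by simp [h])
  rw [integral_sub (integrable_const 1) hint, h, integral_const, probReal_univ, one_smul]

lemma measureReal_subordinatorLaw_Ici_le (hα : 0 < α) (hσ : IsStableSubordinatorDensity α σ)
    (ht : 0 < t) {δ : ℝ} (hδ : 0 < δ) :
    (subordinatorLaw σ t).real (Ici δ) ≤ (1 - exp (-t)) / (1 - exp (-δ)) := by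
  have hnonneg : 0 ≤ᵐ[subordinatorLaw σ t] fun τ => 1 - exp (-τ) :=
    ae_subordinatorLaw_pos.mono fun τ hτ => by simpa using hτ.le
  have hint : Integrable (fun τ => 1 - exp (-τ)) (subordinatorLaw σ t) :=
    Integrable.of_integral_ne_zero (by
      rw [hσ.integral_one_sub_exp_neg_subordinatorLaw hα ht]
      exact (sub_pos.2 (Real.exp_lt_one_iff.2 (neg_lt_zero.2 ht))).ne')
  have hMarkov := mul_meas_ge_le_integral_of_nonneg hnonneg hint (1 - exp (-δ))
  have hlevel : {τ : ℝ | 1 - exp (-δ) ≤ 1 - exp (-τ)} = Ici δ := by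
    ext τ
    simp only [mem_ofPred_eq, sub_le_sub_iff_left, exp_le_exp, neg_le_neg_iff, mem_Ici]
  rwa [hσ.integral_one_sub_exp_neg_subordinatorLaw hα ht, hlevel,
    ← le_div_iff₀' (by simpa using hδ)] at hMarkov

lemma tendsto_subordinatorLaw_compl (hα : 0 < α) (hσ : IsStableSubordinatorDensity α σ) {s : Set ℝ}
    (hs : s ∈ 𝓝[>] 0) : Tendsto (fun t => subordinatorLaw σ t sᶜ) (𝓝[>] 0) (𝓝 0) := by
  obtain ⟨δ, hδ, hδs⟩ := mem_nhdsGT_iff_exists_Ioo_subset.1 hs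
  have hlim : Tendsto (fun t => ENNReal.ofReal ((1 - exp (-t)) / (1 - exp (-δ)))) (𝓝[>] 0) (𝓝 0) :=
    tendsto_nhdsWithin_of_tendsto_nhds ((ENNReal.continuous_ofReal.comp (by fun_prop)).tendsto'
      _ _ (by simp))
  refine tendsto_of_tendsto_of_tendsto_of_le_of_le' tendsto_const_nhds hlim
    (Eventually.of_forall fun _ => zero_le) (eventually_nhdsWithin_of_forall fun t ht => ?_)
  have := hσ.isProbabilityMeasure_subordinatorLaw hα ht
  calc subordinatorLaw σ t sᶜ ≤ subordinatorLaw σ t (Ici δ) :=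
        measure_mono_ae (ae_subordinatorLaw_pos.mono fun τ hτ hτs =>
          not_lt.1 fun hτδ => hτs (hδs ⟨hτ, hτδ⟩))
    _ = ENNReal.ofReal ((subordinatorLaw σ t).real (Ici δ)) := (ofReal_measureReal).symm
    _ ≤ ENNReal.ofReal ((1 - exp (-t)) / (1 - exp (-δ))) :=
        ENNReal.ofReal_le_ofReal (hσ.measureReal_subordinatorLaw_Ici_le hα ht hδ)

lemma subKernel_eq_toReal_mixtureDensity (hσ : IsStableSubordinatorDensity α σ) (hζ : -1 / 2 < ζ)
    (ht : 0 < t) {r s : ℝ} (hr : 0 < r) (hs : 0 < s) :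
    subKernel ζ σ t r s = (mixtureDensity (besselKer ζ) (subordinatorLaw σ t) r s).toReal := by
  have hker : Measurable fun τ => besselKer ζ τ r s := by fun_prop
  calc subKernel ζ σ t r s = ∫ τ, besselHeat ζ τ r s ∂(subordinatorLaw σ t) :=
        (hσ.integral_subordinatorLaw ht _).symm
    _ = ∫ τ, (besselKer ζ τ r s).toReal ∂(subordinatorLaw σ t) :=
        integral_congr_ae (ae_subordinatorLaw_pos.mono fun τ hτ =>
          besselHeat_eq_toReal_besselKer hζ hτ hr hs)
    _ = (mixtureDensity (besselKer ζ) (subordinatorLaw σ t) r s).toReal :=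
        integral_toReal hker.aemeasurable
          (ae_subordinatorLaw_pos.mono fun τ hτ => besselKer_lt_top hζ hτ hr hs)

lemma isSymmMarkovDensity_mixtureDensity_besselKer (hα : 0 < α)
    (hσ : IsStableSubordinatorDensity α σ) (hζ : -1 / 2 < ζ) (ht : 0 < t) :
    IsSymmMarkovDensity (mixtureDensity (besselKer ζ) (subordinatorLaw σ t)) (besselMeasure ζ) :=
  have := hσ.isProbabilityMeasure_subordinatorLaw hα ht
  IsSymmMarkovDensity.mixtureDensity (by fun_prop)
    (ae_subordinatorLaw_pos.mono fun _ => isSymmMarkovDensity_besselKer hζ)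

theorem tendsto_kernelEnergy_mixtureDensity (hα : 0 < α) (hσ : IsStableSubordinatorDensity α σ)
    (hζ : -1 / 2 < ζ) {f : ℝ → ℝ} (hf : Measurable f) (hf2 : MemLp f 2 (besselMeasure ζ)) :
    Tendsto (fun t => kernelEnergy (mixtureDensity (besselKer ζ) (subordinatorLaw σ t))
      (besselMeasure ζ) f) (𝓝[>] 0) (𝓝 0) := by
  have hker : Measurable fun z : ℝ × ℝ × ℝ => besselKer ζ z.1 z.2.1 z.2.2 := by fun_prop
  simp only [kernelEnergy_mixtureDensity hker hf]
  exact tendsto_lintegral_zero_of_tendsto_measure_compl (M := 4 * eLpNorm f 2 (besselMeasure ζ) ^ 2)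
    (ENNReal.mul_ne_top (by simp) (ENNReal.pow_ne_top hf2.2.ne))
    (eventually_nhdsWithin_of_forall fun t => hσ.isProbabilityMeasure_subordinatorLaw hα)
    (Eventually.of_forall fun t => ae_subordinatorLaw_pos.mono fun τ hτ =>
      (isSymmMarkovDensity_besselKer hζ hτ).kernelEnergy_le_four_mul_eLpNorm_sq hf)
    (fun s => hσ.tendsto_subordinatorLaw_compl hα) (tendsto_kernelEnergy_besselKer hζ hf hf2)

end IsStableSubordinatorDensity

lemma tendsto_setIntegral_sq_of_tendsto_kernelEnergy {T : Type*} {l : Filter T}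
    {p : T → ℝ → ℝ → ℝ} {κ : T → ℝ → ℝ → ℝ≥0∞}
    (hκ : ∀ᶠ t in l, IsSymmMarkovDensity (κ t) (besselMeasure ζ))
    (hp : ∀ᶠ t in l, ∀ r > 0, ∀ s > 0, p t r s = (κ t r s).toReal) {f : ℝ → ℝ}
    (hf : Measurable f)
    (hE : Tendsto (fun t => kernelEnergy (κ t) (besselMeasure ζ) f) l (𝓝 0)) :
    Tendsto (fun t => ∫ r in Ioi 0,
      ((∫ s in Ioi 0, p t r s * f s * s ^ (2 * ζ)) - f r) ^ 2 * r ^ (2 * ζ)) l (𝓝 0) := by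
  rw [tendsto_zero_iff_enorm_tendsto_zero]
  refine tendsto_of_tendsto_of_tendsto_of_le_of_le' tendsto_const_nhds hE
    (Eventually.of_forall fun _ => zero_le) ?_
  filter_upwards [hκ, hp] with t ht hpt
  have haverage (r : ℝ) (hr : 0 < r) : ∫ s in Ioi 0, p t r s * f s * s ^ (2 * ζ) =
      ∫ s, (κ t r s).toReal • f s ∂(besselMeasure ζ) := by
    rw [integral_besselMeasure]
    refine setIntegral_congr_fun measurableSet_Ioi fun s hs => ?_
    simp only [hpt r hr s hs, smul_eq_mul]
  have herror : ∫ r in Ioi 0,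
      ((∫ s in Ioi 0, p t r s * f s * s ^ (2 * ζ)) - f r) ^ 2 * r ^ (2 * ζ) =
      ∫ r, ((∫ s, (κ t r s).toReal • f s ∂(besselMeasure ζ)) - f r) ^ 2 ∂(besselMeasure ζ) := by
    rw [integral_besselMeasure]
    refine setIntegral_congr_fun measurableSet_Ioi fun r hr => ?_
    simp only [haverage r hr]
  rw [herror]
  refine (enorm_integral_le_lintegral_enorm _).trans ?_
  simpa only [enorm_pow] using ht.lintegral_enorm_integral_sub_sq_le_kernelEnergy hf

end Subordination

theorem stmt10 (ζ α : ℝ) (hζ : -1/2 < ζ) (hα0 : 0 < α) (hα2 : α ≤ 2)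
    (p : ℝ → ℝ → ℝ → ℝ) (hp : IsSubordinatedBesselKernel ζ α p)
    (f : ℝ → ℝ) (hf : Measurable f)
    (hf2 : Integrable (fun s => f s ^ 2 * s ^ (2 * ζ)) (volume.restrict (Ioi 0))) :
    Tendsto (fun t => ∫ r in Ioi (0 : ℝ),
        ((∫ s in Ioi (0 : ℝ), p t r s * f s * s ^ (2 * ζ)) - f r) ^ 2 * r ^ (2 * ζ))
      (nhdsWithin 0 (Ioi 0)) (nhds 0) := by
  have hfL2 : MemLp f 2 (besselMeasure ζ) :=
    (memLp_two_iff_integrable_sq hf.aestronglyMeasurable).2 (integrable_besselMeasure_iff.2 hf2)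
  rcases hp with ⟨-, hp⟩ | ⟨-, σ, hσ, hp⟩
  · refine tendsto_setIntegral_sq_of_tendsto_kernelEnergy
      (eventually_nhdsWithin_of_forall fun t ht => isSymmMarkovDensity_besselKer hζ ht)
      (eventually_nhdsWithin_of_forall fun t ht r hr s hs => ?_) hf
      (tendsto_kernelEnergy_besselKer hζ hf hfL2)
    rw [hp, besselHeat_eq_toReal_besselKer hζ ht hr hs]
  · refine tendsto_setIntegral_sq_of_tendsto_kernelEnergy
      (eventually_nhdsWithin_of_forall fun t ht =>
        hσ.isSymmMarkovDensity_mixtureDensity_besselKer hα0 hζ ht)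
      (eventually_nhdsWithin_of_forall fun t ht r hr s hs => ?_) hf
      (hσ.tendsto_kernelEnergy_mixtureDensity hα0 hζ hf hfL2)
    rw [hp, hσ.subKernel_eq_toReal_mixtureDensity hζ ht hr hs]
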